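/- arXiv:1802.03736 — 3 statements merged into one kernel-verified Lean document; each statement's English description precedes it below -/
import Mathlib

section
/- With the coordinate setup below, the two Lee forms are related at every point of U by θ*_i = −(1/2)·S_i^s·θ_s, where S is the constant matrix !![−1,1,1; 1,−1,1; 1,1,−1]. -/
open scoped BigOperators

/-- Points of ℝ³. -/
abbrev Pt := Fin 3 → ℝ

/-- Partial derivative `∂_i f` at `p`. -/
noncomputable def pd (i : Fin 3) (f : Pt → ℝ) (p : Pt) : ℝ :=
  fderiv ℝ f p (Pi.single i 1)

/-- The circulant structure `Q` with `Q¹₂ = Q²₃ = Q³₁ = 1`. -/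
def Qmat : Matrix (Fin 3) (Fin 3) ℝ := !![0,1,0; 0,0,1; 1,0,0]

/-- The metric `g_{ij}`: diagonal entries `A`, off-diagonal entries `B`. -/
def gm (A B : Pt → ℝ) (i j : Fin 3) (p : Pt) : ℝ :=
  if i = j then A p else B p

/-- The associated metric `g̃_{ij} = g_{is} Q^s_j + g_{sj} Q^s_i`. -/
def gt (A B : Pt → ℝ) (i j : Fin 3) (p : Pt) : ℝ :=
  ∑ s, (gm A B i s p * Qmat s j + gm A B s j p * Qmat s i)

/-- Christoffel symbols `Γ^k_{ij}` of a metric `h` with (pointwise) inverse `hinv`. -/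
noncomputable def Gamma (h hinv : Fin 3 → Fin 3 → Pt → ℝ) (k i j : Fin 3) (p : Pt) : ℝ :=
  (1/2) * ∑ s, hinv k s p * (pd i (h s j) p + pd j (h s i) p - pd s (h i j) p)

/-- Fundamental tensor `F_{kij} = ∂_k g̃_{ij} − Γ^s_{ki} g̃_{sj} − Γ^s_{kj} g̃_{si}`
of the metric `h` (with inverse `hinv`) acting on `ht` (= the associated metric). -/
noncomputable def Ften (h hinv ht : Fin 3 → Fin 3 → Pt → ℝ) (k i j : Fin 3) (p : Pt) : ℝ :=
  pd k (ht i j) p - (∑ s, Gamma h hinv s k i p * ht s j p)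
    - (∑ s, Gamma h hinv s k j p * ht s i p)

/-- Lee form `θ_k = g^{ij} F_{ijk}`. -/
noncomputable def theta (h hinv ht : Fin 3 → Fin 3 → Pt → ℝ) (k : Fin 3) (p : Pt) : ℝ :=
  ∑ i, ∑ j, hinv i j p * Ften h hinv ht i j k p

/-- Lee form `θ*_k = g^{ij} Q^s_j F_{isk}`. -/
noncomputable def thetaStar (h hinv ht : Fin 3 → Fin 3 → Pt → ℝ) (k : Fin 3) (p : Pt) : ℝ :=
  ∑ i, ∑ j, ∑ s, hinv i j p * Qmat s j * Ften h hinv ht i s k p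

/-- The constant matrix `S = !![−1,1,1; 1,−1,1; 1,1,−1]`. -/
def Smat : Matrix (Fin 3) (Fin 3) ℝ := !![-1,1,1; 1,-1,1; 1,1,-1]

theorem pd_gm (A B : Pt → ℝ) (k i j : Fin 3) (p : Pt) :
    pd k (gm A B i j) p = if i = j then pd k A p else pd k B p := by
  by_cases h : i = j
  · have : gm A B i j = A := by funext q; simp [gm, h]
    rw [this, if_pos h]
  · have : gm A B i j = B := by funext q; simp [gm, h]
    rw [this, if_neg h]

theorem gt_eq (A B : Pt → ℝ) (i j : Fin 3) (p : Pt) :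
    gt A B i j p = if i = j then 2 * B p else A p + B p := by
  fin_cases i <;> fin_cases j <;> simp [gt, gm, Qmat, Fin.sum_univ_three] <;> ring

theorem pd_gt (A B : Pt → ℝ) (k i j : Fin 3) (p : Pt)
    (hA : DifferentiableAt ℝ A p) (hB : DifferentiableAt ℝ B p) :
    pd k (gt A B i j) p = if i = j then 2 * pd k B p else pd k A p + pd k B p := by
  have e : gt A B i j = fun q => if i = j then 2 * B q else A q + B q := by
    funext q; exact gt_eq A B i j q
  rw [e]
  by_cases h : i = j
  · simp only [h, if_true, pd]
    rw [fderiv_const_mul hB]; simp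
  · simp only [h, if_false, pd]
    rw [fderiv_fun_add hA hB]; simp

theorem inv_eq (a b : ℝ) (hb : 0 < b) (hab : b < a) (x y z : ℝ) (c d e : ℝ)
    (h0 : a * x + b * y + b * z = c) (h1 : b * x + a * y + b * z = d)
    (h2 : b * x + b * y + a * z = e) :
    x = ((a + b) * c - b * d - b * e) / ((a - b) * (a + 2 * b)) := by
  have h3 : a - b ≠ 0 := by linarith
  have h4 : a + 2 * b ≠ 0 := by linarith
  rw [eq_div_iff (mul_ne_zero h3 h4)]
  subst h0 h1 h2
  ring

set_option maxHeartbeats 2000000 in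
/-- the Lee forms satisfy `θ*_i = −(1/2) S_i^s θ_s`. -/
theorem lee_forms_relation
    (U : Set Pt) (hU : IsOpen U) (A B : Pt → ℝ)
    (hA : ContDiffOn ℝ (⊤ : ℕ∞) A U) (hB : ContDiffOn ℝ (⊤ : ℕ∞) B U)
    (hpos : ∀ p ∈ U, 0 < B p ∧ B p < A p)
    (ginv : Fin 3 → Fin 3 → Pt → ℝ)
    (hginv : ∀ p ∈ U, ∀ i j, (∑ s, gm A B i s p * ginv s j p) = if i = j then (1:ℝ) else 0) :
    ∀ p ∈ U, ∀ i,
      thetaStar (gm A B) ginv (gt A B) i p =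
        -(1/2) * ∑ s, Smat i s * theta (gm A B) ginv (gt A B) s p := by
  intro p hp i
  have hAd : DifferentiableAt ℝ A p :=
    (hA.contDiffAt (hU.mem_nhds hp)).differentiableAt (by simp)
  have hBd : DifferentiableAt ℝ B p :=
    (hB.contDiffAt (hU.mem_nhds hp)).differentiableAt (by simp)
  obtain ⟨hb, hab⟩ := hpos p hp
  have key : ∀ i j, ginv i j p =
      (if i = j then A p + B p else - B p) / ((A p - B p) * (A p + 2 * B p)) := by
    intro i j
    have h0 := hginv p hp 0 j
    have h1 := hginv p hp 1 j
    have h2 := hginv p hp 2 j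
    simp [Fin.sum_univ_three, gm] at h0 h1 h2
    fin_cases i
    · have := inv_eq (A p) (B p) hb hab _ _ _ _ _ _ h0 h1 h2
      simp only [Fin.zero_eta]
      rw [this]; fin_cases j <;> simp
    · have := inv_eq (A p) (B p) hb hab (ginv 1 j p) (ginv 0 j p) (ginv 2 j p) _ _ _
        ((by ring : _ = _).trans h1) ((by ring : _ = _).trans h0) ((by ring : _ = _).trans h2)
      simp only [Fin.mk_one]
      rw [this]; fin_cases j <;> simp
    · have := inv_eq (A p) (B p) hb hab (ginv 2 j p) (ginv 0 j p) (ginv 1 j p) _ _ _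
        ((by ring : _ = _).trans h2) ((by ring : _ = _).trans h0) ((by ring : _ = _).trans h1)
      simp only [Fin.reduceFinMk]
      rw [this]; fin_cases j <;> simp
  have h3 : A p - B p ≠ 0 := by linarith
  have h4 : A p + 2 * B p ≠ 0 := by linarith
  obtain ⟨t, ht⟩ : ∃ t, t = ((A p - B p) * (A p + 2 * B p))⁻¹ := ⟨_, rfl⟩
  have htD : t * ((A p - B p) * (A p + 2 * B p)) = 1 := by
    rw [ht]; exact inv_mul_cancel₀ (mul_ne_zero h3 h4)
  have key2 : ∀ i j, ginv i j p = (if i = j then A p + B p else - B p) * t := by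
    intro i j
    rw [key, ht, div_eq_mul_inv]
  simp only [thetaStar, theta, Ften, Gamma, pd_gm, pd_gt A B _ _ _ p hAd hBd, gt_eq, key2]
  clear key key2 ht hginv hpos hA hB hAd hBd h3 h4
  generalize A p = a at *
  generalize B p = b at *
  obtain ⟨a0, ha0⟩ : ∃ y, y = pd 0 A p := ⟨_, rfl⟩
  obtain ⟨a1, ha1⟩ : ∃ y, y = pd 1 A p := ⟨_, rfl⟩
  obtain ⟨a2, ha2⟩ : ∃ y, y = pd 2 A p := ⟨_, rfl⟩
  obtain ⟨b0, hb0⟩ : ∃ y, y = pd 0 B p := ⟨_, rfl⟩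
  obtain ⟨b1, hb1⟩ : ∃ y, y = pd 1 B p := ⟨_, rfl⟩
  obtain ⟨b2, hb2⟩ : ∃ y, y = pd 2 B p := ⟨_, rfl⟩
  fin_cases i <;> simp [Fin.sum_univ_three, Qmat, Smat, ← ha0, ← ha1, ← ha2, ← hb0, ← hb1, ← hb2]
  · linear_combination (-t * ((2)*a*a0 + (1)*a*a2 + (1)*a*b0 + (3)*a*b1 + (2)*a*b2 + (1)*b*a0 + (-3)*b*a1 + (-1)*b*a2 + (-4)*b*b0 + (-2)*b*b2)) * htD
  · linear_combination (-t * ((1)*a*a0 + (2)*a*a1 + (2)*a*b0 + (1)*a*b1 + (3)*a*b2 + (-1)*b*a0 + (1)*b*a1 + (-3)*b*a2 + (-2)*b*b0 + (-4)*b*b1)) * htD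
  · linear_combination (-t * ((1)*a*a1 + (2)*a*a2 + (3)*a*b0 + (2)*a*b1 + (1)*a*b2 + (-3)*b*a0 + (-1)*b*a1 + (1)*b*a2 + (-2)*b*b1 + (-4)*b*b2)) * htD
end

section
/- With the coordinate setup below, if the curvature of g̃ vanishes identically on U (R̃^l_{ijk} = 0 for all indices), then the Ricci tensor of g satisfies ρ_{ij} = (τ/3)·g_{ij} + ((2τ* + τ)/6)·g̃_{ij} at every point of U; in particular (U, g, Q) is almost Einstein, i.e. ρ is a functional linear combination of g and g̃. -/
open scoped BigOperators

/-- Curvature `R^l_{ijk} = ∂_i Γ^l_{jk} − ∂_j Γ^l_{ik} + Γ^s_{jk}Γ^l_{is} − Γ^s_{ik}Γ^l_{js}`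
of the metric `h` with inverse `hinv`. -/
noncomputable def Riem (h hinv : Fin 3 → Fin 3 → Pt → ℝ) (l i j k : Fin 3) (p : Pt) : ℝ :=
  pd i (Gamma h hinv l j k) p - pd j (Gamma h hinv l i k) p
    + (∑ s, Gamma h hinv s j k p * Gamma h hinv l i s p)
    - (∑ s, Gamma h hinv s i k p * Gamma h hinv l j s p)

/-- Lowered curvature `R_{ijkl} = h_{ls} R^s_{ijk}`. -/
noncomputable def RiemLow (h hinv : Fin 3 → Fin 3 → Pt → ℝ) (i j k l : Fin 3) (p : Pt) : ℝ :=
  ∑ s, h l s p * Riem h hinv s i j k p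

/-- Ricci tensor `ρ_{jk} = h^{il} R_{ijkl}`. -/
noncomputable def Ricci (h hinv : Fin 3 → Fin 3 → Pt → ℝ) (j k : Fin 3) (p : Pt) : ℝ :=
  ∑ i, ∑ l, hinv i l p * RiemLow h hinv i j k l p

/-- Scalar curvature obtained by contracting the Ricci tensor of `(h, hinv)` with the
(inverse) metric `contr`: `contr^{jk} ρ_{jk}`. -/
noncomputable def scal (h hinv contr : Fin 3 → Fin 3 → Pt → ℝ) (p : Pt) : ℝ :=
  ∑ j, ∑ k, contr j k p * Ricci h hinv j k p

def HP (i : Fin 3) (f : Pt → ℝ) (p : Pt) (d : ℝ) : Prop :=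
  DifferentiableAt ℝ f p ∧ pd i f p = d

theorem HP.add {i f g p d e} (hf : HP i f p d) (hg : HP i g p e) :
    HP i (fun q => f q + g q) p (d + e) := by
  refine ⟨hf.1.add hg.1, ?_⟩
  rw [← hf.2, ← hg.2]; unfold pd
  have := fderiv_fun_add hf.1 hg.1
  rw [this]; rfl

theorem HP.sub {i f g p d e} (hf : HP i f p d) (hg : HP i g p e) :
    HP i (fun q => f q - g q) p (d - e) := by
  refine ⟨hf.1.sub hg.1, ?_⟩
  rw [← hf.2, ← hg.2]; unfold pd
  have := fderiv_fun_sub hf.1 hg.1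
  rw [this]; rfl

theorem HP.mul {i f g p d e} (hf : HP i f p d) (hg : HP i g p e) :
    HP i (fun q => f q * g q) p (d * g p + f p * e) := by
  refine ⟨hf.1.mul hg.1, ?_⟩
  rw [← hf.2, ← hg.2]; unfold pd
  have := fderiv_fun_mul hf.1 hg.1
  rw [this]
  simp only [add_apply, smul_apply, smul_eq_mul]; ring

theorem HP.cmul {i f p d} (r : ℝ) (hf : HP i f p d) :
    HP i (fun q => r * f q) p (r * d) := by
  refine ⟨hf.1.const_mul r, ?_⟩
  rw [← hf.2]; unfold pd
  have := fderiv_const_mul hf.1 r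
  rw [this]; rfl

theorem HP.inv {i f p d} (hf : HP i f p d) (h0 : f p ≠ 0) :
    HP i (fun q => (f q)⁻¹) p (-((f p)⁻¹ ^ 2 * d)) := by
  refine ⟨hf.1.inv h0, ?_⟩
  rw [← hf.2]; unfold pd
  have := ((hasDerivAt_inv h0).comp_hasFDerivAt p hf.1.hasFDerivAt).fderiv
  have h2 : (fun q => (f q)⁻¹) = Inv.inv ∘ f := rfl
  rw [h2, this]
  simp

theorem HP.sum {i p} {f : Fin 3 → Pt → ℝ} {d : Fin 3 → ℝ} (hf : ∀ s, HP i (f s) p (d s)) :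
    HP i (fun q => ∑ s, f s q) p (∑ s, d s) := by
  simp only [Fin.sum_univ_three]
  exact ((hf 0).add (hf 1)).add (hf 2)

theorem HP.congr {i f g p d} {U : Set Pt} (hU : IsOpen U) (hp : p ∈ U) (hf : HP i f p d)
    (h : ∀ q ∈ U, g q = f q) : HP i g p d := by
  have he : g =ᶠ[nhds p] f := Filter.eventually_of_mem (hU.mem_nhds hp) h
  refine ⟨hf.1.congr_of_eventuallyEq he, ?_⟩
  unfold pd; rw [he.fderiv_eq]; exact hf.2

/-- projector entries -/
noncomputable def Pe (i j : Fin 3) : ℝ := if i = j then 2/3 else -1/3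

noncomputable def bil (x y : ℝ) (i j : Fin 3) : ℝ := x * Pe i j + y * (1/3)

/-- Christoffel from first jets; `x y` inverse coefficients, `u v` derivatives. -/
noncomputable def Gj (x y : ℝ) (u v : Fin 3 → ℝ) (k i j : Fin 3) : ℝ :=
  (1/2) * ∑ s, bil x y k s * (bil (u i) (v i) s j + bil (u j) (v j) s i - bil (u s) (v s) i j)

theorem HP.bil {m x y p x' y'} (i j : Fin 3) (hx : HP m x p x') (hy : HP m y p y') :
    HP m (fun q => bil (x q) (y q) i j) p (bil x' y' i j) := by
  have h := (hx.cmul (Pe i j)).add (hy.cmul (1/3))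
  unfold _root_.bil
  simpa only [mul_comm] using h

theorem HP.Gj {m p x y} {u v : Fin 3 → Pt → ℝ} {x' y'} {u' v' : Fin 3 → ℝ} (k i j : Fin 3)
    (hx : HP m x p x') (hy : HP m y p y')
    (hu : ∀ s, HP m (u s) p (u' s)) (hv : ∀ s, HP m (v s) p (v' s)) :
    HP m (fun q => Gj (x q) (y q) (fun s => u s q) (fun s => v s q) k i j) p
      (Gj x' y' (fun s => u s p) (fun s => v s p) k i j + Gj (x p) (y p) u' v' k i j) := by
  have h := HP.cmul (1/2) (HP.sum (fun s => (HP.bil k s hx hy).mul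
    (((HP.bil s j (hu i) (hv i)).add (HP.bil s i (hu j) (hv j))).sub (HP.bil i j (hu s) (hv s)))))
  unfold _root_.Gj
  convert h using 1
  rw [Finset.sum_add_distrib, mul_add]

noncomputable def Rj (x y : ℝ) (u v x' y' : Fin 3 → ℝ) (u' v' : Fin 3 → Fin 3 → ℝ)
    (l i j k : Fin 3) : ℝ :=
  (Gj (x' i) (y' i) u v l j k + Gj x y (u' i) (v' i) l j k)
  - (Gj (x' j) (y' j) u v l i k + Gj x y (u' j) (v' j) l i k)
  + (∑ s, Gj x y u v s j k * Gj x y u v l i s) - (∑ s, Gj x y u v s i k * Gj x y u v l j s)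

theorem HP_of_contDiffOn {f : Pt → ℝ} {U : Set Pt} (hU : IsOpen U)
    (hf : ContDiffOn ℝ (⊤ : ℕ∞) f U) {p} (hp : p ∈ U) (i) : HP i f p (pd i f p) :=
  ⟨(hf.contDiffAt (hU.mem_nhds hp)).differentiableAt (by simp), rfl⟩

theorem contDiffOn_pd {f : Pt → ℝ} {U : Set Pt} (hU : IsOpen U)
    (hf : ContDiffOn ℝ (⊤ : ℕ∞) f U) (i) : ContDiffOn ℝ (⊤ : ℕ∞) (pd i f) U := by
  have h := hf.fderiv_of_isOpen (m := (⊤ : ℕ∞)) hU (by simp)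
  exact h.clm_apply contDiffOn_const

theorem pd_comm {f : Pt → ℝ} {U : Set Pt} (hU : IsOpen U)
    (hf : ContDiffOn ℝ (⊤ : ℕ∞) f U) {p} (hp : p ∈ U) (i j) :
    pd i (pd j f) p = pd j (pd i f) p := by
  have hc := hf.contDiffAt (hU.mem_nhds hp)
  have hs : IsSymmSndFDerivAt ℝ f p := hc.isSymmSndFDerivAt (by
    rw [minSmoothness_of_isRCLikeNormedField]; exact WithTop.coe_le_coe.mpr (le_top : (2 : ℕ∞) ≤ ⊤))
  have h := (hf.fderiv_of_isOpen (m := (⊤ : ℕ∞)) hU (by simp)).contDiffAt (hU.mem_nhds hp)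
  have hd : DifferentiableAt ℝ (fderiv ℝ f) p := h.differentiableAt (by simp)
  have key : ∀ i j, pd i (pd j f) p
      = fderiv ℝ (fderiv ℝ f) p (Pi.single i 1) (Pi.single j 1) := by
    intro i j
    have := fderiv_clm_apply hd (differentiableAt_const (c := (Pi.single j 1 : Pt)))
    unfold pd
    rw [this]; simp
  rw [key, key]; exact hs _ _

theorem Riem_eq {U : Set Pt} (hU : IsOpen U) {a c : Pt → ℝ} (s t s' t' : ℝ)
    (ha : ContDiffOn ℝ (⊤ : ℕ∞) a U) (hc : ContDiffOn ℝ (⊤ : ℕ∞) c U)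
    (ha0 : ∀ p ∈ U, a p ≠ 0) (hc0 : ∀ p ∈ U, c p ≠ 0)
    (h hinv : Fin 3 → Fin 3 → Pt → ℝ)
    (hh : ∀ p ∈ U, ∀ i j, h i j p = bil (s * a p) (t * c p) i j)
    (hi : ∀ p ∈ U, ∀ i j, hinv i j p = bil (s' * (a p)⁻¹) (t' * (c p)⁻¹) i j)
    {p : Pt} (hp : p ∈ U) (l i j k : Fin 3) :
    Riem h hinv l i j k p = Rj (s' * (a p)⁻¹) (t' * (c p)⁻¹)
      (fun m => s * pd m a p) (fun m => t * pd m c p)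
      (fun m => s' * (-((a p)⁻¹ ^ 2 * pd m a p))) (fun m => t' * (-((c p)⁻¹ ^ 2 * pd m c p)))
      (fun m n => s * pd m (pd n a) p) (fun m n => t * pd m (pd n c) p) l i j k := by
  have hpd : ∀ q ∈ U, ∀ m i j, pd m (h i j) q = bil (s * pd m a q) (t * pd m c q) i j := by
    intro q hq m i j
    exact (HP.congr hU hq (HP.bil i j ((HP_of_contDiffOn hU ha hq m).cmul s)
      ((HP_of_contDiffOn hU hc hq m).cmul t)) (fun r hr => hh r hr i j)).2
  have hG : ∀ q ∈ U, ∀ k i j, Gamma h hinv k i j q = Gj (s' * (a q)⁻¹) (t' * (c q)⁻¹)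
      (fun m => s * pd m a q) (fun m => t * pd m c q) k i j := by
    intro q hq k i j
    unfold Gamma Gj
    simp only [hpd q hq, hi q hq]
  have hdG : ∀ m k i j, pd m (Gamma h hinv k i j) p =
      Gj (s' * (-((a p)⁻¹ ^ 2 * pd m a p))) (t' * (-((c p)⁻¹ ^ 2 * pd m c p)))
        (fun n => s * pd n a p) (fun n => t * pd n c p) k i j
      + Gj (s' * (a p)⁻¹) (t' * (c p)⁻¹)
        (fun n => s * pd m (pd n a) p) (fun n => t * pd m (pd n c) p) k i j := by
    intro m k i j
    exact (HP.congr hU hp (HP.Gj k i j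
      (((HP_of_contDiffOn hU ha hp m).inv (ha0 p hp)).cmul s')
      (((HP_of_contDiffOn hU hc hp m).inv (hc0 p hp)).cmul t')
      (fun n => (HP_of_contDiffOn hU (contDiffOn_pd hU ha n) hp m).cmul s)
      (fun n => (HP_of_contDiffOn hU (contDiffOn_pd hU hc n) hp m).cmul t))
      (fun q hq => hG q hq k i j)).2
  unfold Riem Rj
  simp only [hdG, hG p hp]

noncomputable def Sj (s t s' t' α κ : ℝ) (a c : Fin 3 → ℝ) (a2 c2 : Fin 3 → Fin 3 → ℝ)
    (j k : Fin 3) : ℝ :=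
  ∑ i, Rj (s' * α) (t' * κ) (fun m => s * a m) (fun m => t * c m)
      (fun m => s' * (-(α ^ 2 * a m))) (fun m => t' * (-(κ ^ 2 * c m)))
      (fun m n => s * a2 m n) (fun m n => t * c2 m n) i i j k

noncomputable def Dj (α κ : ℝ) (a c : Fin 3 → ℝ) (a2 c2 : Fin 3 → Fin 3 → ℝ)
    (j k : Fin 3) : ℝ :=
  Sj 1 1 1 1 α κ a c a2 c2 j k - Sj (-1) 2 (-1) (1/2) α κ a c a2 c2 j k

theorem Pe_perm (σ : Equiv.Perm (Fin 3)) (i j : Fin 3) : Pe (σ i) (σ j) = Pe i j := by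
  simp [Pe]

theorem Gj_perm (σ : Equiv.Perm (Fin 3)) (x y : ℝ) (u v : Fin 3 → ℝ) (k i j : Fin 3) :
    Gj x y u v (σ k) (σ i) (σ j) = Gj x y (fun m => u (σ m)) (fun m => v (σ m)) k i j := by
  unfold Gj
  rw [← Equiv.sum_comp σ]
  simp only [bil, Pe_perm]

theorem Dj_perm (σ : Equiv.Perm (Fin 3)) (α κ : ℝ) (a c : Fin 3 → ℝ) (a2 c2 : Fin 3 → Fin 3 → ℝ)
    (j k : Fin 3) :
    Dj α κ a c a2 c2 (σ j) (σ k) = Dj α κ (fun m => a (σ m)) (fun m => c (σ m))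
      (fun m n => a2 (σ m) (σ n)) (fun m n => c2 (σ m) (σ n)) j k := by
  have key : ∀ s t s' t', Sj s t s' t' α κ a c a2 c2 (σ j) (σ k)
      = Sj s t s' t' α κ (fun m => a (σ m)) (fun m => c (σ m))
      (fun m n => a2 (σ m) (σ n)) (fun m n => c2 (σ m) (σ n)) j k := by
    intro s t s' t'
    unfold Sj
    rw [← Equiv.sum_comp σ]
    refine Finset.sum_congr rfl fun i _ => ?_
    unfold Rj
    rw [← Equiv.sum_comp σ, ← Equiv.sum_comp σ (fun r => Gj _ _ _ _ r (σ i) (σ k) * _)]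
    simp only [Gj_perm]
  unfold Dj
  rw [key, key]

set_option maxHeartbeats 4000000 in
theorem Dj_diag (α κ : ℝ) (a c : Fin 3 → ℝ) (a2 c2 : Fin 3 → Fin 3 → ℝ)
    (ha : ∀ i j, a2 i j = a2 j i) (hc : ∀ i j, c2 i j = c2 j i) :
    Dj α κ a c a2 c2 0 0 = Dj α κ a c a2 c2 1 1 := by
  have h1 := ha 1 0
  have h2 := ha 2 0
  have h3 := ha 2 1
  have h4 := hc 1 0
  have h5 := hc 2 0
  have h6 := hc 2 1
  simp only [Dj, Sj, Rj, Gj, bil, Fin.sum_univ_three, Pe]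
  simp (decide := true) only [if_true, if_false, h1, h2, h3, h4, h5, h6]
  ring

set_option maxHeartbeats 4000000 in
theorem Dj_off (α κ : ℝ) (a c : Fin 3 → ℝ) (a2 c2 : Fin 3 → Fin 3 → ℝ)
    (ha : ∀ i j, a2 i j = a2 j i) (hc : ∀ i j, c2 i j = c2 j i) :
    Dj α κ a c a2 c2 0 1 = Dj α κ a c a2 c2 1 2 := by
  have h1 := ha 1 0
  have h2 := ha 2 0
  have h3 := ha 2 1
  have h4 := hc 1 0
  have h5 := hc 2 0
  have h6 := hc 2 1
  simp only [Dj, Sj, Rj, Gj, bil, Fin.sum_univ_three, Pe]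
  simp (decide := true) only [if_true, if_false, h1, h2, h3, h4, h5, h6]
  ring

set_option maxHeartbeats 4000000 in
theorem Dj_symm (α κ : ℝ) (a c : Fin 3 → ℝ) (a2 c2 : Fin 3 → Fin 3 → ℝ)
    (ha : ∀ i j, a2 i j = a2 j i) (hc : ∀ i j, c2 i j = c2 j i) :
    Dj α κ a c a2 c2 0 1 = Dj α κ a c a2 c2 1 0 := by
  have h1 := ha 1 0
  have h2 := ha 2 0
  have h3 := ha 2 1
  have h4 := hc 1 0
  have h5 := hc 2 0
  have h6 := hc 2 1
  simp only [Dj, Sj, Rj, Gj, bil, Fin.sum_univ_three, Pe]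
  simp (decide := true) only [if_true, if_false, h1, h2, h3, h4, h5, h6]
  ring

theorem Dj_circ (α κ : ℝ) (a c : Fin 3 → ℝ) (a2 c2 : Fin 3 → Fin 3 → ℝ)
    (ha : ∀ i j, a2 i j = a2 j i) (hc : ∀ i j, c2 i j = c2 j i) (i j : Fin 3) :
    Dj α κ a c a2 c2 i j = if i = j then Dj α κ a c a2 c2 0 0 else Dj α κ a c a2 c2 0 1 := by
  have gen : ∀ σ : Equiv.Perm (Fin 3),
      Dj α κ a c a2 c2 (σ 0) (σ 0) = Dj α κ a c a2 c2 (σ 1) (σ 1)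
      ∧ Dj α κ a c a2 c2 (σ 0) (σ 1) = Dj α κ a c a2 c2 (σ 1) (σ 2)
      ∧ Dj α κ a c a2 c2 (σ 0) (σ 1) = Dj α κ a c a2 c2 (σ 1) (σ 0) := by
    intro σ
    simp only [Dj_perm σ]
    exact ⟨Dj_diag _ _ _ _ _ _ (fun i j => ha _ _) (fun i j => hc _ _),
      Dj_off _ _ _ _ _ _ (fun i j => ha _ _) (fun i j => hc _ _),
      Dj_symm _ _ _ _ _ _ (fun i j => ha _ _) (fun i j => hc _ _)⟩
  obtain ⟨d1, o1, s1⟩ := gen 1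
  obtain ⟨d2, o2, s2⟩ := gen (finRotate 3)
  obtain ⟨d3, o3, s3⟩ := gen ((finRotate 3).trans (finRotate 3))
  have r0 : finRotate 3 0 = 1 := by decide
  have r1 : finRotate 3 1 = 2 := by decide
  have r2 : finRotate 3 2 = 0 := by decide
  simp only [r0, r1, r2, Equiv.trans_apply, Equiv.Perm.one_apply] at *
  fin_cases i <;> fin_cases j <;> simp <;> linarith

theorem inv_uniq {G X Y : Fin 3 → Fin 3 → ℝ}
    (hX : ∀ i j, ∑ s, G i s * X s j = if i = j then (1:ℝ) else 0)
    (hY : ∀ i j, ∑ s, G i s * Y s j = if i = j then (1:ℝ) else 0) (i j) : X i j = Y i j := by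
  have h1 : Matrix.of G * Matrix.of X = 1 := by
    ext i j; simp [Matrix.mul_apply, hX, Matrix.one_apply]
  have h2 : Matrix.of G * Matrix.of Y = 1 := by
    ext i j; simp [Matrix.mul_apply, hY, Matrix.one_apply]
  have := (Matrix.inv_eq_right_inv h1).symm.trans (Matrix.inv_eq_right_inv h2)
  exact congrFun (congrFun this i) j

theorem inv_left {G X : Fin 3 → Fin 3 → ℝ}
    (hX : ∀ i j, ∑ s, G i s * X s j = if i = j then (1:ℝ) else 0) (i j) :
    ∑ s, X i s * G s j = if i = j then (1:ℝ) else 0 := by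
  have h1 : Matrix.of G * Matrix.of X = 1 := by
    ext i j; simp [Matrix.mul_apply, hX, Matrix.one_apply]
  have h2 := mul_eq_one_comm.mp h1
  have := congrFun (congrFun h2 i) j
  simpa [Matrix.mul_apply, Matrix.one_apply] using this

theorem Ricci_eq (h hinv : Fin 3 → Fin 3 → Pt → ℝ) (p : Pt)
    (hh : ∀ i j, (∑ s, h i s p * hinv s j p) = if i = j then (1:ℝ) else 0) (j k : Fin 3) :
    Ricci h hinv j k p = ∑ i, Riem h hinv i i j k p := by
  have hl := inv_left (G := fun i j => h i j p) (X := fun i j => hinv i j p) hh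
  unfold Ricci RiemLow
  refine Finset.sum_congr rfl fun i _ => ?_
  simp only [Finset.mul_sum]
  rw [Finset.sum_comm]
  simp only [← mul_assoc, ← Finset.sum_mul, hl]
  simp

theorem bil_inv {x y x' y' : ℝ} (hx : x * x' = 1) (hy : y * y' = 1) (i j : Fin 3) :
    ∑ s, bil x y i s * bil x' y' s j = if i = j then (1:ℝ) else 0 := by
  fin_cases i <;> fin_cases j <;> simp [Fin.sum_univ_three, bil, Pe] <;>
    first
    | linear_combination (2/3) * hx + (1/3) * hy
    | linear_combination (-1/3) * hx + (1/3) * hy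

/-- if the curvature of `g̃` vanishes on `U`, then
`ρ_{ij} = (τ/3) g_{ij} + ((2τ* + τ)/6) g̃_{ij}`; in particular `(U, g, Q)` is
almost Einstein: `ρ` is a functional linear combination of `g` and `g̃`. -/
theorem almost_einstein_of_flat_tilde
    (U : Set Pt) (hU : IsOpen U) (A B : Pt → ℝ)
    (hA : ContDiffOn ℝ (⊤ : ℕ∞) A U) (hB : ContDiffOn ℝ (⊤ : ℕ∞) B U)
    (hpos : ∀ p ∈ U, 0 < B p ∧ B p < A p)
    (ginv gtinv : Fin 3 → Fin 3 → Pt → ℝ)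
    (hginv : ∀ p ∈ U, ∀ i j, (∑ s, gm A B i s p * ginv s j p) = if i = j then (1:ℝ) else 0)
    (hgtinv : ∀ p ∈ U, ∀ i j, (∑ s, gt A B i s p * gtinv s j p) = if i = j then (1:ℝ) else 0)
    (hflat : ∀ p ∈ U, ∀ l i j k, Riem (gt A B) gtinv l i j k p = 0) :
    (∀ p ∈ U, ∀ i j,
      Ricci (gm A B) ginv i j p =
        (scal (gm A B) ginv ginv p / 3) * gm A B i j p
        + ((2 * scal (gm A B) ginv gtinv p + scal (gm A B) ginv ginv p) / 6) * gt A B i j p)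
    ∧ ∃ β γ : Pt → ℝ, ∀ p ∈ U, ∀ i j,
        Ricci (gm A B) ginv i j p = β p * gm A B i j p + γ p * gt A B i j p := by
  have hmain : ∀ p ∈ U, ∀ i j,
      Ricci (gm A B) ginv i j p =
        (scal (gm A B) ginv ginv p / 3) * gm A B i j p
        + ((2 * scal (gm A B) ginv gtinv p + scal (gm A B) ginv ginv p) / 6) * gt A B i j p := by
    let a : Pt → ℝ := fun q => A q - B q
    let c : Pt → ℝ := fun q => A q + 2 * B q
    have ha : ContDiffOn ℝ (⊤ : ℕ∞) a U := hA.sub hB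
    have hc : ContDiffOn ℝ (⊤ : ℕ∞) c U := hA.add (contDiffOn_const.mul hB)
    have ha0 : ∀ p ∈ U, a p ≠ 0 := fun p hp => by
      have := hpos p hp; simp only [a]; intro h; linarith
    have hc0 : ∀ p ∈ U, c p ≠ 0 := fun p hp => by
      have := hpos p hp; simp only [c]; intro h; linarith
    have hg : ∀ p ∈ U, ∀ i j, gm A B i j p = bil (1 * a p) (1 * c p) i j := by
      intro p _ i j
      simp only [gm, bil, Pe, a, c]
      split_ifs <;> ring
    have hgt : ∀ p ∈ U, ∀ i j, gt A B i j p = bil (-1 * a p) (2 * c p) i j := by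
      intro p _ i j
      fin_cases i <;> fin_cases j <;>
        simp [gt, gm, bil, Pe, a, c, Qmat, Fin.sum_univ_three] <;> ring
    have hgi : ∀ p ∈ U, ∀ i j, ginv i j p = bil (1 * (a p)⁻¹) (1 * (c p)⁻¹) i j := by
      intro p hp
      refine inv_uniq (G := fun i j => gm A B i j p) (X := fun i j => ginv i j p) (hginv p hp) ?_
      simp only [hg p hp]
      have h1 := ha0 p hp
      have h2 := hc0 p hp
      exact bil_inv (by field_simp) (by field_simp)
    have hgti : ∀ p ∈ U, ∀ i j, gtinv i j p = bil (-1 * (a p)⁻¹) (1/2 * (c p)⁻¹) i j := by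
      intro p hp
      refine inv_uniq (G := fun i j => gt A B i j p) (X := fun i j => gtinv i j p) (hgtinv p hp) ?_
      simp only [hgt p hp]
      have h1 := ha0 p hp
      have h2 := hc0 p hp
      exact bil_inv (by field_simp) (by field_simp)
    intro p hp
    have hR : ∀ i j, Ricci (gm A B) ginv i j p = Dj (a p)⁻¹ (c p)⁻¹
        (fun m => pd m a p) (fun m => pd m c p)
        (fun m n => pd m (pd n a) p) (fun m n => pd m (pd n c) p) i j := by
      intro i j
      rw [Ricci_eq _ _ _ (hginv p hp)]
      have h0 : ∑ m, Riem (gt A B) gtinv m m i j p = 0 :=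
        Finset.sum_eq_zero fun m _ => hflat p hp m m i j
      rw [← sub_zero (∑ m, Riem (gm A B) ginv m m i j p), ← h0]
      simp only [Riem_eq hU 1 1 1 1 ha hc ha0 hc0 _ _ hg hgi hp,
        Riem_eq hU (-1) 2 (-1) (1/2) ha hc ha0 hc0 _ _ hgt hgti hp]
      rfl
    have hR' : ∃ x y : ℝ, ∀ i j, Ricci (gm A B) ginv i j p = if i = j then x else y :=
      ⟨_, _, fun i j => (hR i j).trans
        (Dj_circ _ _ _ _ _ _ (fun i j => pd_comm hU ha hp i j) (fun i j => pd_comm hU hc hp i j) i j)⟩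
    obtain ⟨x, y, hxy⟩ := hR'
    have h1 := ha0 p hp
    have h2 := hc0 p hp
    intro i j
    unfold scal
    simp only [hxy, hg p hp, hgt p hp, hgi p hp, hgti p hp]
    generalize a p = a at *
    generalize c p = c at *
    by_cases hij : i = j <;>
    · simp (decide := true) only [bil, Pe, hij, Fin.sum_univ_three, if_true, if_false]
      field_simp
      ring
  exact ⟨hmain, _, _, hmain⟩
end

section
/- With the Lie-algebra setup below, let the bracket be [x₁,x₂] = λ₁x₁ + λ₂x₂ + λ₃x₃, [x₂,x₃] = ν₁x₁ + ν₂x₂ + ν₃x₃, [x₁,x₃] = (ν₂+λ₃)x₁ + (ν₃+λ₁)x₂ + (ν₁+λ₂)x₃, and assume it satisfies the Jacobi identity. Then the curvature components are: R(x₁,x₂,x₁,x₂) = −(1/4)(λ₁+ν₁+ν₃)² + (3/4)λ₃² + λ₁² + λ₂² + ν₂λ₃ + ν₂² + (1/2)λ₁λ₃ + (1/2)ν₃λ₃ − (1/2)λ₃ν₁; R(x₁,x₃,x₁,x₃) = (3/4)(λ₁+ν₃)² − (1/4)(λ₃−ν₁)² + (λ₃+ν₂)² + (λ₂+ν₁)²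 + (1/2)(λ₁+ν₃)(ν₁+λ₃) − λ₁ν₃; R(x₂,x₃,x₂,x₃) = −(1/4)λ₁² + λ₂² − (1/4)λ₃² + (3/4)ν₁² + ν₂² + (3/4)ν₃² + (1/2)λ₁(−ν₃+ν₁−λ₃) − (1/2)λ₃ν₃ + λ₂ν₁ − (1/2)ν₁λ₃ + (1/2)ν₁ν₃; R(x₁,x₂,x₂,x₃) = −λ₂λ₃ + λ₁ν₁ + λ₁² + λ₁ν₃ + λ₃ν₃; R(x₁,x₂,x₁,x₃) = λ₂(λ₁+ν₁+ν₃) + λ₃(λ₁+λ₂+ν₁); R(x₁,x₃,x₃,x₂) = −λ₁ν₂ − ν₂ν₃ − λ₃ν₁ − ν₂λ₃ − ν₁ν₃ − ν₂ν₁. Moreover the Lee forms are θ₁ = 3(λ₁+λ₃+ν₂), θ₂ = 3(ν₂−λ₂), θ₃ = −3(λ₂+ν₁+ν₃), θ*₁ = (3/2)(λ₁+2λ₂+λ₃+ν₁+ν₃), θ*₂ = −(3/2)(λ₁+λ₃−ν₁−ν₃), θ*₃ = −(3/2)(λ₁+λ₃+ν₁+2ν₂+ν₃). -/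
open scoped BigOperators

/-- The underlying vector space ℝ³. -/
abbrev V := Fin 3 → ℝ

/-- The standard basis `x₁, x₂, x₃` of ℝ³ (indexed from 0). -/
def e (i : Fin 3) : V := Pi.single i 1

/-- The standard inner product `g` on ℝ³ (the basis `e` is orthonormal). -/
def ip (x y : V) : ℝ := ∑ i, x i * y i

/-- The circulant structure `Q`: `Q x₁ = x₂`, `Q x₂ = x₃`, `Q x₃ = x₁`. -/
def Qv (x : V) : V := fun j => x (j - 1)

/-- The associated metric `g̃(y,z) = g(y,Qz) + g(Qy,z)`. -/
def gtil (x y : V) : ℝ := ip x (Qv y) + ip (Qv x) y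

/-- Bilinearity of a map `V → V → V`. -/
def Bilin (f : V → V → V) : Prop :=
  (∀ (a : ℝ) (x y z : V), f (a • x + y) z = a • f x z + f y z) ∧
  (∀ (a : ℝ) (x y z : V), f x (a • y + z) = a • f x y + f x z)

/-- Skew-symmetry of a map `V → V → V`. -/
def Skew (f : V → V → V) : Prop := ∀ x y, f x y = - f y x

/-- The Jacobi identity for a bracket. -/
def Jacobi (br : V → V → V) : Prop :=
  ∀ x y z, br x (br y z) + br y (br z x) + br z (br x y) = 0

/-- The Koszul formula determining the Levi-Civita connection `∇` of the
left-invariant metric `g` on the basis: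
`2g(∇_{xᵢ}xⱼ, xₖ) = g([xᵢ,xⱼ],xₖ) + g([xₖ,xᵢ],xⱼ) + g([xₖ,xⱼ],xᵢ)`. -/
def Koszul (br nabla : V → V → V) : Prop :=
  ∀ i j k : Fin 3, 2 * ip (nabla (e i) (e j)) (e k) =
    ip (br (e i) (e j)) (e k) + ip (br (e k) (e i)) (e j) + ip (br (e k) (e j)) (e i)

/-- The curvature operator `R(x,y)z = ∇ₓ∇_y z − ∇_y∇ₓz − ∇_{[x,y]}z`. -/
def Rop (br nabla : V → V → V) (x y z : V) : V :=
  nabla x (nabla y z) - nabla y (nabla x z) - nabla (br x y) z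

/-- The curvature tensor of type (0,4): `R(x,y,z,u) = g(R(x,y)z, u)`. -/
def Rten (br nabla : V → V → V) (x y z u : V) : ℝ := ip (Rop br nabla x y z) u

/-- The Ricci tensor `ρ(y,z) = Σᵢ R(xᵢ,y,z,xᵢ)`. -/
def ricci (br nabla : V → V → V) (y z : V) : ℝ := ∑ i, Rten br nabla (e i) y z (e i)

/-- The scalar curvature `τ = Σᵢ ρ(xᵢ,xᵢ)`. -/
def scalc (br nabla : V → V → V) : ℝ := ∑ i, ricci br nabla (e i) (e i)

/-- The fundamental tensor `F(x,y,z) = −g̃(∇ₓy, z) − g̃(y, ∇ₓz)`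
(the covariant derivative of `g̃`, which has constant components in this frame). -/
def Fop (nabla : V → V → V) (x y z : V) : ℝ := -(gtil (nabla x y) z) - gtil y (nabla x z)

/-- The Lee form `θₖ = Σᵢ F(xᵢ,xᵢ,xₖ)`. -/
def lee (nabla : V → V → V) (k : Fin 3) : ℝ := ∑ i, Fop nabla (e i) (e i) (e k)

/-- The Lee form `θ*ₖ = Σᵢ F(xᵢ,Qxᵢ,xₖ)`. -/
def leeStar (nabla : V → V → V) (k : Fin 3) : ℝ := ∑ i, Fop nabla (e i) (Qv (e i)) (e k)

lemma bil_zero_left {f : V → V → V} (h : Bilin f) (z : V) : f 0 z = 0 := by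
  have := h.1 (-1) 0 0 z
  simpa using this

lemma bil_zero_right {f : V → V → V} (h : Bilin f) (z : V) : f z 0 = 0 := by
  have := h.2 (-1) z 0 0
  simpa using this

lemma vec_exp (x : V) : x = x 0 • e 0 + (x 1 • e 1 + (x 2 • e 2 + 0)) := by
  ext i
  fin_cases i <;> simp [e]

lemma bil_left {f : V → V → V} (h : Bilin f) (x z : V) :
    f x z = x 0 • f (e 0) z + (x 1 • f (e 1) z + x 2 • f (e 2) z) := by
  conv_lhs => rw [vec_exp x]
  rw [h.1, h.1, h.1, bil_zero_left h, add_zero]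

lemma bil_right {f : V → V → V} (h : Bilin f) (x z : V) :
    f z x = x 0 • f z (e 0) + (x 1 • f z (e 1) + x 2 • f z (e 2)) := by
  conv_lhs => rw [vec_exp x]
  rw [h.2, h.2, h.2, bil_zero_right h, add_zero]

lemma ip_e (x : V) (k : Fin 3) : ip x (e k) = x k := by
  fin_cases k <;> simp [ip, e, Fin.sum_univ_three]

lemma skew_self {f : V → V → V} (h : Skew f) (x : V) : f x x = 0 := by
  have := h x x
  ext i
  have := congrFun this i
  simp only [Pi.neg_apply] at this
  simp only [Pi.zero_apply]
  linarith

/-- for the bracket `[x₁,x₂] = λ₁x₁ + λ₂x₂ + λ₃x₃`,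
`[x₂,x₃] = ν₁x₁ + ν₂x₂ + ν₃x₃`, `[x₁,x₃] = (ν₂+λ₃)x₁ + (ν₃+λ₁)x₂ + (ν₁+λ₂)x₃`
satisfying the Jacobi identity, the curvature components and the Lee forms of
`(G, g, Q)` are given by the stated formulas. -/
theorem curvature_and_lee_forms_of_G
    (br : V → V → V) (hbil : Bilin br) (hskew : Skew br) (hjac : Jacobi br)
    (nabla : V → V → V) (hnbil : Bilin nabla) (hkos : Koszul br nabla)
    (l1 l2 l3 n1 n2 n3 : ℝ)
    (h12 : br (e 0) (e 1) = l1 • e 0 + l2 • e 1 + l3 • e 2)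
    (h23 : br (e 1) (e 2) = n1 • e 0 + n2 • e 1 + n3 • e 2)
    (h13 : br (e 0) (e 2) = (n2 + l3) • e 0 + (n3 + l1) • e 1 + (n1 + l2) • e 2) :
    -- curvature components
    (Rten br nabla (e 0) (e 1) (e 0) (e 1) =
      -(1/4) * (l1 + n1 + n3)^2 + (3/4) * l3^2 + l1^2 + l2^2 + n2*l3 + n2^2
        + (1/2) * l1 * l3 + (1/2) * n3 * l3 - (1/2) * l3 * n1 ∧
     Rten br nabla (e 0) (e 2) (e 0) (e 2) =
      (3/4) * (l1 + n3)^2 - (1/4) * (l3 - n1)^2 + (l3 + n2)^2 + (l2 + n1)^2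
        + (1/2) * (l1 + n3) * (n1 + l3) - l1 * n3 ∧
     Rten br nabla (e 1) (e 2) (e 1) (e 2) =
      -(1/4) * l1^2 + l2^2 - (1/4) * l3^2 + (3/4) * n1^2 + n2^2 + (3/4) * n3^2
        + (1/2) * l1 * (-n3 + n1 - l3) - (1/2) * l3 * n3 + l2 * n1
        - (1/2) * n1 * l3 + (1/2) * n1 * n3 ∧
     Rten br nabla (e 0) (e 1) (e 1) (e 2) =
      -l2*l3 + l1*n1 + l1^2 + l1*n3 + l3*n3 ∧
     Rten br nabla (e 0) (e 1) (e 0) (e 2) =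
      l2 * (l1 + n1 + n3) + l3 * (l1 + l2 + n1) ∧
     Rten br nabla (e 0) (e 2) (e 2) (e 1) =
      -l1*n2 - n2*n3 - l3*n1 - n2*l3 - n1*n3 - n2*n1) ∧
    -- Lee forms
    (lee nabla 0 = 3 * (l1 + l3 + n2) ∧
     lee nabla 1 = 3 * (n2 - l2) ∧
     lee nabla 2 = -3 * (l2 + n1 + n3) ∧
     leeStar nabla 0 = (3/2) * (l1 + 2*l2 + l3 + n1 + n3) ∧
     leeStar nabla 1 = -(3/2) * (l1 + l3 - n1 - n3) ∧
     leeStar nabla 2 = -(3/2) * (l1 + l3 + n1 + 2*n2 + n3)) := by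
  have b00 := skew_self hskew (e 0)
  have b11 := skew_self hskew (e 1)
  have b22 := skew_self hskew (e 2)
  have b10 := hskew (e 1) (e 0)
  have b21 := hskew (e 2) (e 1)
  have b20 := hskew (e 2) (e 0)
  rw [h12] at b10
  rw [h23] at b21
  rw [h13] at b20
  have hk : ∀ i j k : Fin 3, nabla (e i) (e j) k =
      (br (e i) (e j) k + br (e k) (e i) j + br (e k) (e j) i) / 2 := by
    intro i j k
    have := hkos i j k
    simp only [ip_e] at this
    linarith
  have hn : ∀ i j : Fin 3, nabla (e i) (e j) =
      ![(br (e i) (e j) 0 + br (e 0) (e i) j + br (e 0) (e j) i) / 2,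
        (br (e i) (e j) 1 + br (e 1) (e i) j + br (e 1) (e j) i) / 2,
        (br (e i) (e j) 2 + br (e 2) (e i) j + br (e 2) (e j) i) / 2] := by
    intro i j
    ext k
    rw [hk]
    fin_cases k <;> rfl
  have e0 : e 0 = ![1, 0, 0] := by ext i; fin_cases i <;> simp [e]
  have e1 : e 1 = ![0, 1, 0] := by ext i; fin_cases i <;> simp [e]
  have e2 : e 2 = ![0, 0, 1] := by ext i; fin_cases i <;> simp [e]
  have v12 : l1 • e 0 + l2 • e 1 + l3 • e 2 = ![l1, l2, l3] := by simp [e0, e1, e2]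
  have v23 : n1 • e 0 + n2 • e 1 + n3 • e 2 = ![n1, n2, n3] := by simp [e0, e1, e2]
  have v13 : (n2 + l3) • e 0 + (n3 + l1) • e 1 + (n1 + l2) • e 2
    = ![n2 + l3, n3 + l1, n1 + l2] := by simp [e0, e1, e2]
  rw [v12] at h12 b10
  rw [v23] at h23 b21
  rw [v13] at h13 b20
  have n00 := hn 0 0
  have n01 := hn 0 1
  have n02 := hn 0 2
  have n10 := hn 1 0
  have n11 := hn 1 1
  have n12 := hn 1 2
  have n20 := hn 2 0
  have n21 := hn 2 1
  have n22 := hn 2 2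
  simp [b00, b11, b22, b10, b20, b21, h12, h13, h23] at n00 n01 n02 n10 n11 n12 n20 n21 n22
  have J := congrFun (hjac (e 0) (e 1) (e 2)) 2
  rw [h23, b20, h12, bil_right hbil ![n1, n2, n3], bil_right hbil (-![n2 + l3, n3 + l1, n1 + l2]),
    bil_right hbil ![l1, l2, l3]] at J
  simp [b00, b11, b22, b10, b20, b21, h12, h13, h23] at J
  have hR : ∀ i j k m : Fin 3, Rten br nabla (e i) (e j) (e k) (e m) =
      (nabla (e j) (e k) 0 * nabla (e i) (e 0) m + nabla (e j) (e k) 1 * nabla (e i) (e 1) m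
        + nabla (e j) (e k) 2 * nabla (e i) (e 2) m)
      - (nabla (e i) (e k) 0 * nabla (e j) (e 0) m + nabla (e i) (e k) 1 * nabla (e j) (e 1) m
        + nabla (e i) (e k) 2 * nabla (e j) (e 2) m)
      - (br (e i) (e j) 0 * nabla (e 0) (e k) m + br (e i) (e j) 1 * nabla (e 1) (e k) m
        + br (e i) (e j) 2 * nabla (e 2) (e k) m) := by
    intro i j k m
    rw [Rten, ip_e, Rop, bil_right hnbil (nabla (e j) (e k)),
      bil_right hnbil (nabla (e i) (e k)), bil_left hnbil (br (e i) (e j))]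
    simp only [Pi.sub_apply, Pi.add_apply, Pi.smul_apply, smul_eq_mul]
    ring
  have q0 : Qv (e 0) = e 1 := by
    rw [e0, e1]; ext i; fin_cases i <;> simp [Qv] <;> rfl
  have q1 : Qv (e 1) = e 2 := by
    rw [e1, e2]; ext i; fin_cases i <;> simp [Qv] <;> rfl
  have q2 : Qv (e 2) = e 0 := by
    rw [e2, e0]; ext i; fin_cases i <;> simp [Qv] <;> rfl
  have hg : ∀ x y : V, gtil x y = x 0 * y 2 + x 1 * y 0 + x 2 * y 1
      + (x 2 * y 0 + x 0 * y 1 + x 1 * y 2) := by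
    intro x y
    have a0 : (0 : Fin 3) - 1 = 2 := by decide
    have a1 : (1 : Fin 3) - 1 = 0 := by decide
    have a2 : (2 : Fin 3) - 1 = 1 := by decide
    simp only [gtil, ip, Qv, Fin.sum_univ_three, a0, a1, a2]
  refine ⟨⟨?_, ?_, ?_, ?_, ?_, ?_⟩, ?_, ?_, ?_, ?_, ?_, ?_⟩
  iterate 5
    · rw [hR]
      simp [n00, n01, n02, n10, n11, n12, n20, n21, n22, h12, h13, h23]
      ring
  · rw [hR]
    simp [n00, n01, n02, n10, n11, n12, n20, n21, n22, h12, h13, h23]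
    linear_combination J
  all_goals
    simp only [lee, leeStar, Fop, Fin.sum_univ_three, q0, q1, q2, hg, n00, n01, n02, n10, n11, n12,
      n20, n21, n22]
    simp [e0, e1, e2]
    ring
end
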